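/- Let M ∈ K^{p×p} be invertible. Then K^{1×1×p} with entrywise addition and the multiplication *_M is a commutative ring with unity, where the unity is the tensor e ∈ K^{1×1×p} determined by the condition that every frontal slice of e ×₃ M equals 1 (i.e., e = [1|1|⋯|1] ×₃ M⁻¹). -/

import Mathlib

open Matrix

/-- Mode-3 product of a third-order tensor (stack of `p` frontal slices)
with a matrix `M ∈ K^{q×p}`: `(A ×₃ M)ₖ = Σ_l M k l • A l`. -/
def mode3 {K : Type*} [Semiring K] {m n p q : ℕ} (M : Matrix (Fin q) (Fin p) K)
    (A : Fin p → Matrix (Fin m) (Fin n) K) : Fin q → Matrix (Fin m) (Fin n) K :=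
  fun k => ∑ l, M k l • A l

/-- Face-wise product of two third-order tensors. -/
def facewise {K : Type*} [Semiring K] {m n s p : ℕ}
    (A : Fin p → Matrix (Fin m) (Fin n) K) (B : Fin p → Matrix (Fin n) (Fin s) K) :
    Fin p → Matrix (Fin m) (Fin s) K :=
  fun i => A i * B i

/-- Tensor-tensor multiplication `A *_M B = ((A ×₃ M) △ (B ×₃ M)) ×₃ M⁺`. -/
def tmul3 {K : Type*} [Semiring K] {m n s p q : ℕ} (M : Matrix (Fin q) (Fin p) K)
    (Mp : Matrix (Fin p) (Fin q) K)
    (A : Fin p → Matrix (Fin m) (Fin n) K) (B : Fin p → Matrix (Fin n) (Fin s) K) :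
    Fin p → Matrix (Fin m) (Fin s) K :=
  mode3 Mp (facewise (mode3 M A) (mode3 M B))

/-! As `M` is invertible, the transform `A ↦ A ×₃ M` turns `*_M` into the face-wise product, so
the laws of `*_M` are those of matrix multiplication on each frontal slice. On tubes the slices
are `1 × 1`, which makes the product commutative. -/

section Mode3

variable {K : Type*} [Semiring K] {m n p q r : ℕ}

theorem mode3_mode3 (N : Matrix (Fin r) (Fin q) K) (M : Matrix (Fin q) (Fin p) K)
    (A : Fin p → Matrix (Fin m) (Fin n) K) :
    mode3 N (mode3 M A) = mode3 (N * M) A := by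
  funext k
  simp only [mode3, Matrix.mul_apply, Finset.smul_sum, Finset.sum_smul, smul_smul]
  exact Finset.sum_comm

theorem mode3_one (A : Fin p → Matrix (Fin m) (Fin n) K) :
    mode3 (1 : Matrix (Fin p) (Fin p) K) A = A := by
  funext k
  simp [mode3, Matrix.one_apply, ite_smul]

theorem mode3_add (M : Matrix (Fin q) (Fin p) K) (A B : Fin p → Matrix (Fin m) (Fin n) K) :
    mode3 M (A + B) = mode3 M A + mode3 M B := by
  funext k
  simp only [mode3, Pi.add_apply, smul_add, Finset.sum_add_distrib]

theorem mode3_mode3_of_mul_eq_one {N : Matrix (Fin q) (Fin p) K} {M : Matrix (Fin p) (Fin q) K}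
    (h : N * M = 1) (A : Fin q → Matrix (Fin m) (Fin n) K) :
    mode3 N (mode3 M A) = A := by
  rw [mode3_mode3, h, mode3_one]

end Mode3

section Facewise

variable {K : Type*} [Semiring K] {m n s t p : ℕ}

theorem facewise_assoc (A : Fin p → Matrix (Fin m) (Fin n) K)
    (B : Fin p → Matrix (Fin n) (Fin s) K) (C : Fin p → Matrix (Fin s) (Fin t) K) :
    facewise (facewise A B) C = facewise A (facewise B C) :=
  funext fun i => Matrix.mul_assoc (A i) (B i) (C i)

theorem facewise_add (A : Fin p → Matrix (Fin m) (Fin n) K)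
    (B C : Fin p → Matrix (Fin n) (Fin s) K) :
    facewise A (B + C) = facewise A B + facewise A C :=
  funext fun i => Matrix.mul_add (A i) (B i) (C i)

theorem add_facewise (A B : Fin p → Matrix (Fin m) (Fin n) K)
    (C : Fin p → Matrix (Fin n) (Fin s) K) :
    facewise (A + B) C = facewise A C + facewise B C :=
  funext fun i => Matrix.add_mul (A i) (B i) (C i)

theorem one_facewise (A : Fin p → Matrix (Fin m) (Fin n) K) :
    facewise (fun _ => 1) A = A :=
  funext fun i => Matrix.one_mul (A i)

theorem facewise_one (A : Fin p → Matrix (Fin m) (Fin n) K) :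
    facewise A (fun _ => 1) = A :=
  funext fun i => Matrix.mul_one (A i)

theorem facewise_comm_of_tubes {R : Type*} [CommSemiring R]
    (A B : Fin p → Matrix (Fin 1) (Fin 1) R) :
    facewise A B = facewise B A := by
  ext k i j
  rw [Subsingleton.elim i 0, Subsingleton.elim j 0]
  simp only [facewise, Matrix.mul_apply, Fin.sum_univ_one, mul_comm]

end Facewise

section Tmul3

variable {K : Type*} [Semiring K] {m n s t p q : ℕ}
  {M : Matrix (Fin q) (Fin p) K} {N : Matrix (Fin p) (Fin q) K}

theorem mode3_tmul3 (hMN : M * N = 1) (A : Fin p → Matrix (Fin m) (Fin n) K)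
    (B : Fin p → Matrix (Fin n) (Fin s) K) :
    mode3 M (tmul3 M N A B) = facewise (mode3 M A) (mode3 M B) :=
  mode3_mode3_of_mul_eq_one hMN _

theorem tmul3_assoc (hMN : M * N = 1) (A : Fin p → Matrix (Fin m) (Fin n) K)
    (B : Fin p → Matrix (Fin n) (Fin s) K) (C : Fin p → Matrix (Fin s) (Fin t) K) :
    tmul3 M N (tmul3 M N A B) C = tmul3 M N A (tmul3 M N B C) := by
  rw [tmul3, mode3_tmul3 hMN, facewise_assoc, ← mode3_tmul3 hMN B C, ← tmul3]

theorem tmul3_add (M : Matrix (Fin q) (Fin p) K) (N : Matrix (Fin p) (Fin q) K)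
    (A : Fin p → Matrix (Fin m) (Fin n) K) (B C : Fin p → Matrix (Fin n) (Fin s) K) :
    tmul3 M N A (B + C) = tmul3 M N A B + tmul3 M N A C := by
  simp only [tmul3, mode3_add, facewise_add]

theorem add_tmul3 (M : Matrix (Fin q) (Fin p) K) (N : Matrix (Fin p) (Fin q) K)
    (A B : Fin p → Matrix (Fin m) (Fin n) K) (C : Fin p → Matrix (Fin n) (Fin s) K) :
    tmul3 M N (A + B) C = tmul3 M N A C + tmul3 M N B C := by
  simp only [tmul3, mode3_add, add_facewise]

/-- The identity tensor `[I|I|⋯|I] ×₃ N`, the two-sided unit of `*_M` when `N` inverts `M`. -/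
def idTensor (n : ℕ) (N : Matrix (Fin p) (Fin q) K) : Fin p → Matrix (Fin n) (Fin n) K :=
  mode3 N fun _ => 1

theorem mode3_idTensor (hMN : M * N = 1) : mode3 M (idTensor n N) = fun _ => 1 :=
  mode3_mode3_of_mul_eq_one hMN _

theorem idTensor_tmul3 (hMN : M * N = 1) (hNM : N * M = 1)
    (A : Fin p → Matrix (Fin m) (Fin n) K) :
    tmul3 M N (idTensor m N) A = A := by
  rw [tmul3, mode3_idTensor hMN, one_facewise, mode3_mode3_of_mul_eq_one hNM]

theorem tmul3_idTensor (hMN : M * N = 1) (hNM : N * M = 1)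
    (A : Fin p → Matrix (Fin m) (Fin n) K) :
    tmul3 M N A (idTensor n N) = A := by
  rw [tmul3, mode3_idTensor hMN, facewise_one, mode3_mode3_of_mul_eq_one hNM]

theorem tmul3_comm_of_tubes {R : Type*} [CommSemiring R] (M : Matrix (Fin q) (Fin p) R)
    (N : Matrix (Fin p) (Fin q) R) (A B : Fin p → Matrix (Fin 1) (Fin 1) R) :
    tmul3 M N A B = tmul3 M N B A := by
  rw [tmul3, facewise_comm_of_tubes, ← tmul3]

end Tmul3

theorem tube_commRing_general {K : Type*} [CommSemiring K] {p : ℕ}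
    {M N : Matrix (Fin p) (Fin p) K} (hMN : M * N = 1) :
    let mul : (Fin p → Matrix (Fin 1) (Fin 1) K) → (Fin p → Matrix (Fin 1) (Fin 1) K) →
        (Fin p → Matrix (Fin 1) (Fin 1) K) := tmul3 M N
    let e : Fin p → Matrix (Fin 1) (Fin 1) K := mode3 N (fun _ => 1)
    (∀ a b c, mul (mul a b) c = mul a (mul b c)) ∧
    (∀ a b, mul a b = mul b a) ∧
    (∀ a b c, mul a (b + c) = mul a b + mul a c) ∧
    (∀ a b c, mul (a + b) c = mul a c + mul b c) ∧
    (∀ a, mul e a = a) ∧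
    (∀ a, mul a e = a) := by
  have hNM : N * M = 1 := mul_eq_one_comm.mp hMN
  exact ⟨tmul3_assoc hMN, tmul3_comm_of_tubes M N, tmul3_add M N, add_tmul3 M N,
    idTensor_tmul3 hMN hNM, tmul3_idTensor hMN hNM⟩

/-- for invertible `M ∈ K^{p×p}`, the space `K^{1×1×p}` with entrywise
addition and the multiplication `*_M` is a commutative ring whose unity is the tensor
`e = [1|1|⋯|1] ×₃ M⁻¹` (every frontal slice of `e ×₃ M` equals `1`). -/
theorem tube_commRing {K : Type*} [RCLike K] {p : ℕ}
    (M : Matrix (Fin p) (Fin p) K) (hM : IsUnit M.det) :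
    let mul : (Fin p → Matrix (Fin 1) (Fin 1) K) → (Fin p → Matrix (Fin 1) (Fin 1) K) →
        (Fin p → Matrix (Fin 1) (Fin 1) K) := tmul3 M M⁻¹
    let e : Fin p → Matrix (Fin 1) (Fin 1) K := mode3 M⁻¹ (fun _ => 1)
    (∀ a b c, mul (mul a b) c = mul a (mul b c)) ∧
    (∀ a b, mul a b = mul b a) ∧
    (∀ a b c, mul a (b + c) = mul a b + mul a c) ∧
    (∀ a b c, mul (a + b) c = mul a c + mul b c) ∧
    (∀ a, mul e a = a) ∧
    (∀ a, mul a e = a) :=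
  tube_commRing_general (Matrix.mul_nonsing_inv M hM)
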